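/- Let n ≥ 0, assume the hypotheses guaranteeing that Q_n : ℓ²_{w'} → ℓ²_w is a bounded operator with D_n Q_n = I, and assume additionally that Σ_{k=0}^∞ w(k)|h^{(n)}(k)|² = ∞ (so the kernel of D_n in ℓ²_w is trivial). Then Q_n D_n f = f for every f ∈ dom(D_n) = {f ∈ ℓ²_w : D_n f ∈ ℓ²_{w'}}; hence Q_n is a two-sided inverse of D_n. -/

import Mathlib

/-- The difference operator `D_n` on sequences. -/
noncomputable def Dn (β μ : ℕ → ℂ) (n : ℕ) (f : ℕ → ℂ) (k : ℕ) : ℂ :=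
  β (k + n) * f k - β k * (μ (k + 1) / μ k) * f (k + 1)

/-- The formal kernel vector `h^{(n)}(k) = (∏_{i=0}^{n-1} β(k+i)) / μ(k)`. -/
noncomputable def hker (β μ : ℕ → ℂ) (n : ℕ) (k : ℕ) : ℂ :=
  (∏ i ∈ Finset.range n, β (k + i)) / μ k

/-- The integral kernel of the operator `Q_n`. -/
noncomputable def Qker (β μ : ℕ → ℂ) (n : ℕ) (k j : ℕ) : ℂ :=
  (∏ i ∈ Finset.range n, β (k + i)) / (∏ i ∈ Finset.range (n + 1), β (j + i)) *
    (μ j / μ k)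

/-- The operator `Q_n`: `(Q_n g)(k) = Σ_{j=k}^∞ K_n(k,j) g(j)`. -/
noncomputable def Qop (β μ : ℕ → ℂ) (n : ℕ) (g : ℕ → ℂ) (k : ℕ) : ℂ :=
  ∑' j : ℕ, if k ≤ j then Qker β μ n k j * g j else 0

/-- Membership in the weighted space `ℓ²_w`: `Σ_k w(k) |f(k)|² < ∞`. -/
def MemL2 (w : ℕ → ℝ) (f : ℕ → ℂ) : Prop :=
  Summable fun k => w k * ‖f k‖ ^ 2

/-- The pairing of sequences that are square-summable for reciprocal weights converges
absolutely. -/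
theorem summable_mul_of_weighted_sq {v : ℕ → ℝ} (hv : ∀ j, 0 < v j) {K g : ℕ → ℂ}
    (hK : Summable fun j => ‖K j‖ ^ 2 / v j) (hg : MemL2 v g) :
    Summable fun j => ‖K j * g j‖ := by
  refine Summable.of_nonneg_of_le (fun j => norm_nonneg _) (fun j => ?_) (hK.add hg)
  have hvj := hv j
  have hrw : ‖K j‖ ^ 2 / v j + v j * ‖g j‖ ^ 2 - ‖K j * g j‖ =
      ((‖K j‖ - v j * ‖g j‖) ^ 2 + ‖K j‖ * (v j * ‖g j‖)) / v j := by
    rw [norm_mul]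
    field_simp
    ring
  have hnonneg : 0 ≤ ((‖K j‖ - v j * ‖g j‖) ^ 2 + ‖K j‖ * (v j * ‖g j‖)) / v j := by
    positivity
  linarith

/-- The Cauchy–Schwarz inequality for weighted series. -/
theorem norm_tsum_mul_sq_le {v : ℕ → ℝ} (hv : ∀ j, 0 < v j) {K g : ℕ → ℂ}
    (hK : Summable fun j => ‖K j‖ ^ 2 / v j) (hg : MemL2 v g) :
    ‖∑' j, K j * g j‖ ^ 2 ≤ (∑' j, ‖K j‖ ^ 2 / v j) * ∑' j, v j * ‖g j‖ ^ 2 := by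
  have hs := summable_mul_of_weighted_sq hv hK hg
  have hlim : (∑' j, ‖K j * g j‖) ^ 2 ≤
      (∑' j, ‖K j‖ ^ 2 / v j) * ∑' j, v j * ‖g j‖ ^ 2 := by
    refine le_of_tendsto_of_tendsto' (hs.hasSum.pow 2) (Filter.Tendsto.mul hK.hasSum hg.hasSum)
      fun s => Finset.sum_sq_le_sum_mul_sum_of_sq_le_mul s (fun j _ => ?_) (fun j _ => ?_)
        (fun j _ => ?_)
    · have := hv j
      positivity
    · have := hv j
      positivity
    · have := (hv j).ne'
      refine le_of_eq ?_
      rw [norm_mul]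
      field_simp
  exact (pow_le_pow_left₀ (norm_nonneg _) (norm_tsum_le_tsum_norm hs) 2).trans hlim

theorem hker_ne_zero {β μ : ℕ → ℂ} (hβ : ∀ k, β k ≠ 0) (hμ : ∀ k, μ k ≠ 0) (n k : ℕ) :
    hker β μ n k ≠ 0 :=
  div_ne_zero (Finset.prod_ne_zero_iff.2 fun _ _ => hβ _) (hμ k)

/-- The summands of `Q_n D_n f` telescope after division by the kernel vector. -/
theorem Qker_mul_Dn {β μ : ℕ → ℂ} (hβ : ∀ k, β k ≠ 0) (hμ : ∀ k, μ k ≠ 0) (n : ℕ)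
    (f : ℕ → ℂ) (k j : ℕ) :
    Qker β μ n k j * Dn β μ n f j =
      hker β μ n k * (f j / hker β μ n j - f (j + 1) / hker β μ n (j + 1)) := by
  have hP : ∀ m, ∏ i ∈ Finset.range n, β (m + i) ≠ 0 := fun m =>
    Finset.prod_ne_zero_iff.2 fun _ _ => hβ _
  have hlast : ∏ i ∈ Finset.range (n + 1), β (j + i) =
      (∏ i ∈ Finset.range n, β (j + i)) * β (j + n) := Finset.prod_range_succ _ _
  have hfirst : (∏ i ∈ Finset.range n, β (j + i)) * β (j + n) =
      (∏ i ∈ Finset.range n, β (j + 1 + i)) * β j := by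
    rw [← hlast, Finset.prod_range_succ']
    simp only [add_zero, add_assoc, add_comm 1]
  unfold Qker Dn hker
  rw [hlast]
  have hPk := hP k
  have hPj := hP j
  have hPj' := hP (j + 1)
  have hμk := hμ k
  have hμj := hμ j
  have hβn := hβ (j + n)
  generalize (∏ i ∈ Finset.range n, β (k + i)) = A at *
  generalize (∏ i ∈ Finset.range n, β (j + i)) = B at *
  generalize (∏ i ∈ Finset.range n, β (j + 1 + i)) = C at *
  field_simp
  linear_combination f (j + 1) * μ (j + 1) * hfirst

/-- Pointwise bound on the kernel of `Q_n` on its support. -/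
theorem norm_Qker_le {β μ : ℕ → ℂ} (hβ : ∀ k, β k ≠ 0) {M c : ℝ} (hc : 0 < c)
    (hM : ∀ k j m : ℕ, k ≤ j →
      ‖∏ i ∈ Finset.range (m + 1), β (k + i)‖ ≤
        M * ‖∏ i ∈ Finset.range (m + 1), β (j + i)‖)
    (hβlow : ∀ k : ℕ, c * (1 + k) ≤ ‖β k‖) (n : ℕ) {k j : ℕ} (hkj : k ≤ j) :
    ‖Qker β μ n k j‖ ≤ max M 1 / c * (((max j k : ℝ) + 1)⁻¹ * ‖μ j / μ k‖) := by
  have hquot : ‖∏ i ∈ Finset.range n, β (k + i)‖ ≤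
      max M 1 * ‖∏ i ∈ Finset.range n, β (j + i)‖ := by
    cases n with
    | zero => simp
    | succ m =>
      exact (hM k j m hkj).trans
        (mul_le_mul_of_nonneg_right (le_max_left _ _) (norm_nonneg _))
  have hlow : c * ((j : ℝ) + 1) ≤ ‖β (j + n)‖ := by
    refine le_trans ?_ (hβlow (j + n))
    push_cast
    have : 0 ≤ c * (n : ℝ) := by positivity
    linarith
  have hPj : 0 < ‖∏ i ∈ Finset.range n, β (j + i)‖ :=
    norm_pos_iff.2 (Finset.prod_ne_zero_iff.2 fun _ _ => hβ _)
  have hmax : (max j k : ℝ) = j := max_eq_left (by exact_mod_cast hkj)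
  unfold Qker
  rw [norm_mul, Finset.prod_range_succ, norm_div, norm_mul, hmax, ← mul_assoc]
  refine mul_le_mul_of_nonneg_right ?_ (norm_nonneg _)
  calc ‖∏ i ∈ Finset.range n, β (k + i)‖ /
        (‖∏ i ∈ Finset.range n, β (j + i)‖ * ‖β (j + n)‖)
      ≤ (max M 1 * ‖∏ i ∈ Finset.range n, β (j + i)‖) /
        (‖∏ i ∈ Finset.range n, β (j + i)‖ * (c * ((j : ℝ) + 1))) := by gcongr
    _ = max M 1 / c * ((j : ℝ) + 1)⁻¹ := by field_simp

/-- If the series defining `Q_n D_n f` converge, then `Q_n D_n f` differs from `f` by a multiple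
of the kernel vector. -/
theorem exists_Qop_Dn_eq_sub {β μ : ℕ → ℂ} (hβ : ∀ k, β k ≠ 0) (hμ : ∀ k, μ k ≠ 0) (n : ℕ)
    (f : ℕ → ℂ)
    (hs : ∀ k, Summable fun j => if k ≤ j then Qker β μ n k j * Dn β μ n f j else 0) :
    ∃ L : ℂ, ∀ k, Qop β μ n (Dn β μ n f) k = f k - L * hker β μ n k := by
  have hh := hker_ne_zero hβ hμ n
  have hpartial : ∀ k d, ∑ j ∈ Finset.range (k + d),
      (if k ≤ j then Qker β μ n k j * Dn β μ n f j else 0) =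
        f k - hker β μ n k * (f (k + d) / hker β μ n (k + d)) := by
    intro k d
    induction d with
    | zero =>
      rw [Finset.sum_eq_zero fun j hj => if_neg (by simpa using hj), add_zero,
        mul_div_cancel₀ _ (hh k), sub_self]
    | succ d ih =>
      rw [← add_assoc, Finset.sum_range_succ, ih, if_pos (Nat.le_add_right k d),
        Qker_mul_Dn hβ hμ]
      ring
  have hlim : ∀ k, Filter.Tendsto (fun N => f N / hker β μ n N) Filter.atTop
      (nhds ((f k - Qop β μ n (Dn β μ n f) k) / hker β μ n k)) := by
    intro k
    have htend := ((hs k).hasSum.tendsto_sum_nat.const_sub (f k)).div_const (hker β μ n k)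
    refine htend.congr' ?_
    filter_upwards [Filter.eventually_ge_atTop k] with N hN
    obtain ⟨d, rfl⟩ := Nat.exists_eq_add_of_le hN
    rw [hpartial, sub_sub_cancel, mul_div_cancel_left₀ _ (hh k)]
  refine ⟨(f 0 - Qop β μ n (Dn β μ n f) 0) / hker β μ n 0, fun k => ?_⟩
  rw [tendsto_nhds_unique (hlim 0) (hlim k), div_mul_cancel₀ _ (hh k), sub_sub_cancel]

theorem MemL2.sub {w : ℕ → ℝ} (hw : ∀ k, 0 < w k) {f g : ℕ → ℂ} (hf : MemL2 w f)
    (hg : MemL2 w g) : MemL2 w fun k => f k - g k := by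
  refine Summable.of_nonneg_of_le (fun k => ?_) (fun k => ?_)
    ((Summable.add hf hg).mul_left 2)
  · have := hw k
    positivity
  · have hsq : ‖f k - g k‖ ^ 2 ≤ 2 * (‖f k‖ ^ 2 + ‖g k‖ ^ 2) :=
      (pow_le_pow_left₀ (norm_nonneg _) (norm_sub_le _ _) 2).trans add_sq_le
    calc w k * ‖f k - g k‖ ^ 2 ≤ w k * (2 * (‖f k‖ ^ 2 + ‖g k‖ ^ 2)) :=
          mul_le_mul_of_nonneg_left hsq (hw k).le
      _ = 2 * (w k * ‖f k‖ ^ 2 + w k * ‖g k‖ ^ 2) := by ring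

theorem MemL2.of_const_mul {w : ℕ → ℝ} {L : ℂ} (hL : L ≠ 0) {f : ℕ → ℂ}
    (hf : MemL2 w fun k => L * f k) : MemL2 w f := by
  refine (summable_mul_left_iff (pow_ne_zero 2 (norm_ne_zero_iff.2 hL))).1 (hf.congr fun k => ?_)
  rw [norm_mul]
  ring

/-- under the hypotheses guaranteeing that `Q_n : ℓ²_{w'} → ℓ²_w` is
bounded with `D_n Q_n = I`, and assuming additionally `Σ_k w(k)|h^{(n)}(k)|² = ∞`
(so the kernel of `D_n` in `ℓ²_w` is trivial), we have `Q_n D_n f = f` for every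
`f ∈ dom(D_n) = {f ∈ ℓ²_w : D_n f ∈ ℓ²_{w'}}`; hence `Q_n` is a two-sided inverse
of `D_n`. -/
theorem statement5 (w w' : ℕ → ℝ) (hw : ∀ k, 0 < w k) (hw' : ∀ k, 0 < w' k)
    (β μ : ℕ → ℂ) (hβ : ∀ k, β k ≠ 0) (hμ : ∀ k, μ k ≠ 0) (hμ0 : μ 0 = 1)
    (M c : ℝ) (hc : 0 < c)
    (hM : ∀ k j m : ℕ, k ≤ j →
      ‖∏ i ∈ Finset.range (m + 1), β (k + i)‖ ≤
        M * ‖∏ i ∈ Finset.range (m + 1), β (j + i)‖)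
    (hβlow : ∀ k : ℕ, c * (1 + k) ≤ ‖β k‖)
    (hsum : Summable fun p : ℕ × ℕ =>
      ((max p.2 p.1 : ℝ) + 1)⁻¹ ^ 2 * ‖μ p.2 / μ p.1‖ ^ 2 * (w p.1 / w' p.2))
    (n : ℕ) (hdiv : ¬ MemL2 w (hker β μ n)) :
    ∀ f : ℕ → ℂ, MemL2 w f → MemL2 w' (Dn β μ n f) →
      ∀ k : ℕ, Qop β μ n (Dn β μ n f) k = f k := by
  intro f hf hDf k
  set C := max M 1 / c
  set T : ℕ × ℕ → ℝ := fun p =>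
    ((max p.2 p.1 : ℝ) + 1)⁻¹ ^ 2 * ‖μ p.2 / μ p.1‖ ^ 2 * (w p.1 / w' p.2) with hT
  set K : ℕ → ℕ → ℂ := fun k j => if k ≤ j then Qker β μ n k j else 0 with hK
  have hrow : ∀ k j, ‖K k j‖ ^ 2 / w' j ≤ C ^ 2 / w k * T (k, j) := by
    intro k j
    have hwk := hw k
    have hwj := hw' j
    have hbound : ‖K k j‖ ≤ C * (((max j k : ℝ) + 1)⁻¹ * ‖μ j / μ k‖) := by
      by_cases hkj : k ≤ j
      · simpa only [hK, if_pos hkj] using norm_Qker_le hβ hc hM hβlow n hkj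
      · simp only [hK, if_neg hkj, norm_zero]
        positivity
    calc ‖K k j‖ ^ 2 / w' j ≤ (C * (((max j k : ℝ) + 1)⁻¹ * ‖μ j / μ k‖)) ^ 2 / w' j := by
          gcongr
      _ = C ^ 2 / w k * T (k, j) := by
          simp only [hT]
          field_simp
  have hTrow : ∀ k, Summable fun j => T (k, j) := hsum.prod_factor
  have hKsum : ∀ k, Summable fun j => ‖K k j‖ ^ 2 / w' j := fun k =>
    Summable.of_nonneg_of_le (fun j => div_nonneg (sq_nonneg _) (hw' j).le) (hrow k)
      ((hTrow k).mul_left _)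
  have hite : ∀ k j, K k j * Dn β μ n f j =
      if k ≤ j then Qker β μ n k j * Dn β μ n f j else 0 := fun k j => by
    simp only [hK, ite_mul, zero_mul]
  obtain ⟨L, hL⟩ := exists_Qop_Dn_eq_sub hβ hμ n f fun k =>
    (summable_mul_of_weighted_sq hw' (hKsum k) hDf).of_norm.congr (hite k)
  have hQ : MemL2 w (Qop β μ n (Dn β μ n f)) := by
    refine Summable.of_nonneg_of_le (fun k => mul_nonneg (hw k).le (sq_nonneg _)) (fun k => ?_)
      ((hsum.prod.mul_left (C ^ 2)).mul_right (∑' j, w' j * ‖Dn β μ n f j‖ ^ 2))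
    have hwk := hw k
    have hG : 0 ≤ ∑' j, w' j * ‖Dn β μ n f j‖ ^ 2 :=
      tsum_nonneg fun j => mul_nonneg (hw' j).le (sq_nonneg _)
    have hQeq : Qop β μ n (Dn β μ n f) k = ∑' j, K k j * Dn β μ n f j :=
      tsum_congr fun j => (hite k j).symm
    have hle : ∑' j, ‖K k j‖ ^ 2 / w' j ≤ C ^ 2 / w k * ∑' j, T (k, j) := by
      rw [← tsum_mul_left]
      exact (hKsum k).tsum_le_tsum (hrow k) ((hTrow k).mul_left _)
    calc w k * ‖Qop β μ n (Dn β μ n f) k‖ ^ 2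
        ≤ w k * ((C ^ 2 / w k * ∑' j, T (k, j)) * ∑' j, w' j * ‖Dn β μ n f j‖ ^ 2) := by
          rw [hQeq]
          gcongr
          exact (norm_tsum_mul_sq_le hw' (hKsum k) hDf).trans (by gcongr)
      _ = C ^ 2 * (∑' j, T (k, j)) * ∑' j, w' j * ‖Dn β μ n f j‖ ^ 2 := by field_simp
  have hL0 : L = 0 := by
    by_contra hne
    refine hdiv (MemL2.of_const_mul hne ?_)
    have hsub := hf.sub hw hQ
    simpa only [hL, sub_sub_cancel] using hsub
  rw [hL, hL0, zero_mul, sub_zero]
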